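/- Let k ≥ 4 be an integer and let H be a 2-contractible ℓ-overlapping k-tree with t edges. Then there exist a₀ > 0 and β > 0, depending only on H, such that for all sufficiently large n the following holds: if F is a k-graph on [n] with |F| = a·C(n,k−1) and a ≥ a₀, then there exists a collection K of copies of H in F such that (1) |K| ≥ β·a·n^{k−1}·(β·a·n^{k−ℓ−1})^{t−1}, and (2) for every set S of edges of F with 1 ≤ |S| ≤ t, d_K(S) ≤ (β·a·n^{k−ℓ−1})^{t−|S|}. -/

import Mathlib

open Finset Filter

attribute [local instance] Classical.propDecidable

/-- The vertex set `[n] = {1,…,n}`. -/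
def vtx (n : ℕ) : Finset ℕ := Finset.Icc 1 n

/-- `F` is a `k`-graph on `[n]`: a family of `k`-element subsets of `[n]`. -/
def IsKGraphOn (k n : ℕ) (F : Finset (Finset ℕ)) : Prop :=
  ∀ E ∈ F, E ⊆ vtx n ∧ E.card = k

/-- The vertex set of a hypergraph (union of its edges). -/
def vertexSet {α : Type} [DecidableEq α] (H : Finset (Finset α)) : Finset α := H.sup id

/-- The degree of a vertex: the number of edges containing it. -/
def vdeg {α : Type} [DecidableEq α] (H : Finset (Finset α)) (v : α) : ℕ :=
  (H.filter fun E => v ∈ E).card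

/-- Hypertrees, defined recursively: a single edge is a hypertree, and a hypertree grows
by adding a new leaf edge `E` whose intersection with the current vertex set equals its
intersection with some existing (parent) edge `F`. -/
inductive IsHypertree {α : Type} [DecidableEq α] : Finset (Finset α) → Prop
  | single (E : Finset α) : IsHypertree {E}
  | grow {H : Finset (Finset α)} (E F : Finset α) (hH : IsHypertree H) (hE : E ∉ H)
      (hF : F ∈ H) (hint : E ∩ vertexSet H = E ∩ F) : IsHypertree (insert E H)

/-- A `k`-tree: a `k`-uniform hypertree. -/
def IsKTree {α : Type} [DecidableEq α] (k : ℕ) (H : Finset (Finset α)) : Prop :=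
  IsHypertree H ∧ ∀ E ∈ H, E.card = k

/-- A hypergraph is 2-contractible if every edge contains at least two vertices of degree 1. -/
def TwoContractible {α : Type} [DecidableEq α] (H : Finset (Finset α)) : Prop :=
  ∀ E ∈ H, 2 ≤ (E.filter fun v => vdeg H v = 1).card

/-- `S` is a cross-cut of `H`: every edge meets `S` in exactly one vertex. -/
def IsCrosscut {α : Type} [DecidableEq α] (H : Finset (Finset α)) (S : Finset α) : Prop :=
  ∀ E ∈ H, (E ∩ S).card = 1

/-- `σ` is the cross-cut number of `H`: the minimum size of a cross-cut. -/
def IsCrosscutNumber {α : Type} [DecidableEq α] (H : Finset (Finset α)) (σ : ℕ) : Prop :=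
  IsLeast {m | ∃ S : Finset α, IsCrosscut H S ∧ S.card = m} σ

/-- A hypergraph is `ℓ`-overlapping if any two distinct edges meet in at most `ℓ` vertices. -/
def Overlapping {α : Type} [DecidableEq α] (ℓ : ℕ) (H : Finset (Finset α)) : Prop :=
  ∀ E ∈ H, ∀ F ∈ H, E ≠ F → (E ∩ F).card ≤ ℓ

/-- `K` is (the edge set of) a copy of `H`, i.e. the image of `H` under a map that is
injective on the vertex set of `H`. -/
def IsCopyOf {α : Type} [DecidableEq α] (H : Finset (Finset α)) (K : Finset (Finset ℕ)) : Prop :=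
  ∃ φ : α → ℕ, Set.InjOn φ ↑(vertexSet H) ∧ K = H.image fun E => E.image φ

/-- `F` contains no subgraph isomorphic to `H`. -/
def HFree {α : Type} [DecidableEq α] (H : Finset (Finset α)) (F : Finset (Finset ℕ)) : Prop :=
  ∀ K ⊆ F, ¬ IsCopyOf H K

/-- The collection of copies of `H` in `F` (as distinct subgraphs of `F`). -/
noncomputable def copies {α : Type} [DecidableEq α] (H : Finset (Finset α))
    (F : Finset (Finset ℕ)) : Finset (Finset (Finset ℕ)) :=
  F.powerset.filter (IsCopyOf H)

/-- The number of `H`-free `k`-graphs on the vertex set `[n]`. -/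
noncomputable def forb {α : Type} [DecidableEq α] (n k : ℕ) (H : Finset (Finset α)) : ℕ :=
  (((vtx n).powersetCard k).powerset.filter (HFree H)).card

/-- `H` is a `k`-uniform linear cycle of length `ℓ`. -/
def IsLinearCycle {α : Type} [DecidableEq α] (k ℓ : ℕ) (H : Finset (Finset α)) : Prop :=
  ∃ E : ℕ → Finset α,
    (∀ i < ℓ, (E i).card = k) ∧
    (∀ i < ℓ, ∀ j < ℓ, i ≠ j → E i ≠ E j) ∧
    (∀ i < ℓ, (E i ∩ E ((i + 1) % ℓ)).card = 1) ∧
    (∀ i < ℓ, ∀ j < ℓ, i ≠ j → E i ∩ E ((i + 1) % ℓ) ≠ E j ∩ E ((j + 1) % ℓ)) ∧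
    (∀ i < ℓ, ∀ j < ℓ, i ≠ j → (i + 1) % ℓ ≠ j → (j + 1) % ℓ ≠ i → Disjoint (E i) (E j)) ∧
    H = (Finset.range ℓ).image E

/-- `(X 0, …, X (k-1))` is a `k`-partition of `F`. -/
def IsKPartition (k : ℕ) (F : Finset (Finset ℕ)) (X : Fin k → Finset ℕ) : Prop :=
  (∀ i j, i ≠ j → Disjoint (X i) (X j)) ∧ ∀ E ∈ F, ∀ i, (E ∩ X i).card = 1

/-- The `J`-projection of an edge. -/
def projJ {k : ℕ} (X : Fin k → Finset ℕ) (J : Finset (Fin k)) (E : Finset ℕ) : Finset ℕ :=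
  E ∩ J.sup X

/-- The pattern of a vertex set. -/
def pattern {k : ℕ} (X : Fin k → Finset ℕ) (D : Finset ℕ) : Finset (Fin k) :=
  Finset.univ.filter fun i => (D ∩ X i).Nonempty

/-- `MI(F)`: the patterns of intersections of pairs of distinct edges. -/
noncomputable def MI {k : ℕ} (F : Finset (Finset ℕ)) (X : Fin k → Finset ℕ) :
    Finset (Finset (Fin k)) :=
  ((F ×ˢ F).filter fun p => p.1 ≠ p.2).image fun p => pattern X (p.1 ∩ p.2)

/-- The link of a vertex set `D` in `F`. -/
def link {α : Type} [DecidableEq α] (F : Finset (Finset α)) (D : Finset α) :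
    Finset (Finset α) :=
  (F.filter fun E => D ⊆ E).image fun E => E \ D

/-- The degree of a vertex set `D` in `F`: the size of its link. -/
def setDeg {α : Type} [DecidableEq α] (F : Finset (Finset α)) (D : Finset α) : ℕ :=
  (link F D).card

/-- A nonempty hypergraph is `s`-diverse if every vertex has degree less than `|H|/s`. -/
def SDiverse {α : Type} [DecidableEq α] (s : ℕ) (H : Finset (Finset α)) : Prop :=
  H.Nonempty ∧ ∀ v : α, s * vdeg H v < H.card

/-- `D` is `s`-strong in `F` if its link is `s`-diverse. -/
def SStrong {α : Type} [DecidableEq α] (s : ℕ) (F : Finset (Finset α)) (D : Finset α) : Prop :=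
  SDiverse s (link F D)

/-- `F`, with `k`-partition `X`, is `s`-super-homogeneous: for every `J ∈ MI(F)` and every
edge `E ∈ F`, the projection `E_J` is `s`-strong and `d_F(E_J) ≥ max{s, |F|/(2k·n^|J|)}`. -/
def SuperHomogeneous (n k s : ℕ) (F : Finset (Finset ℕ)) (X : Fin k → Finset ℕ) : Prop :=
  ∀ J ∈ MI F X, ∀ E ∈ F,
    SStrong s F (projJ X J E) ∧
    s ≤ setDeg F (projJ X J E) ∧
    (F.card : ℝ) / (2 * k * (n : ℝ) ^ J.card) ≤ (setDeg F (projJ X J E) : ℝ)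

/-- The rank of a family of subsets of `[k]`: the minimum size of a set `D ⊆ [k]` contained
in no member of the family. -/
noncomputable def rankFam (k : ℕ) (𝒥 : Finset (Finset (Fin k))) : ℕ :=
  sInf {d | ∃ D : Finset (Fin k), D.card = d ∧ ∀ J ∈ 𝒥, ¬ D ⊆ J}

/-- A family of subsets of `[k]` is of type 1 if it contains the full power set of some
`(k-2)`-set `B`. -/
def TypeOne (k : ℕ) (𝒥 : Finset (Finset (Fin k))) : Prop :=
  ∃ B : Finset (Fin k), B.card = k - 2 ∧ ∀ S ⊆ B, S ∈ 𝒥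

/-- The constant `c(k,s) = k!/(k^k·(2s(1+2^k))^(2^k))`. -/
noncomputable def cks (k s : ℕ) : ℝ :=
  (Nat.factorial k : ℝ) / ((k : ℝ) ^ k * (2 * (s : ℝ) * (1 + 2 ^ k)) ^ (2 ^ k))

/-- Degree of a set of vertices in a (uniform) hypergraph `K`: number of edges containing it. -/
def uDeg {α : Type} [DecidableEq α] (K : Finset (Finset α)) (S : Finset α) : ℕ :=
  (K.filter fun e => S ⊆ e).card

/-- A `t`-uniform hypergraph is `d`-graded if `d_K(S) ≤ d^(t-|S|)` for all `S` with
`1 ≤ |S| ≤ t`. -/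
def Graded {α : Type} [DecidableEq α] (t : ℕ) (d : ℝ) (K : Finset (Finset α)) : Prop :=
  ∀ S : Finset α, 1 ≤ S.card → S.card ≤ t → (uDeg K S : ℝ) ≤ d ^ (t - S.card)

/-- `S` is saturated by `K`: `d_K(S) = ⌊d^(t-|S|)⌋`. -/
def Saturated {α : Type} [DecidableEq α] (t : ℕ) (d : ℝ) (K : Finset (Finset α))
    (S : Finset α) : Prop :=
  uDeg K S = ⌊d ^ (t - S.card)⌋₊

/-- `S` is admissible: no nonempty subset of `S` is saturated. -/
def Admissible {α : Type} [DecidableEq α] (t : ℕ) (d : ℝ) (K : Finset (Finset α))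
    (S : Finset α) : Prop :=
  ∀ S' ⊆ S, S'.Nonempty → ¬ Saturated t d K S'

/-- `Z_K(S)`: the vertices `v` such that `S ∪ {v}` is inadmissible and `{v}` is not
saturated. -/
noncomputable def Zset {α : Type} [DecidableEq α] (t : ℕ) (d : ℝ) (K : Finset (Finset α))
    (S : Finset α) : Finset α :=
  (vertexSet K).filter fun v => ¬ Admissible t d K (insert v S) ∧ ¬ Saturated t d K {v}

/-- `ex(G,H)`: the maximum number of edges of an `H`-free subgraph of `G`. -/
noncomputable def exIn {α : Type} [DecidableEq α] (H : Finset (Finset α))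
    (G : Finset (Finset ℕ)) : ℕ :=
  (G.powerset.filter (HFree H)).sup Finset.card

/-- The probability, in the random `k`-graph `G^(k)(n,p)` (each `k`-subset of `[n]` is an
edge independently with probability `p`), of the event `A`. -/
noncomputable def probEvent (k n : ℕ) (p : ℝ) (A : Finset (Finset ℕ) → Prop) : ℝ :=
  ∑ G ∈ ((vtx n).powersetCard k).powerset.filter A,
    p ^ G.card * (1 - p) ^ (((vtx n).powersetCard k).card - G.card)

/-!
A largest graded collection `K` of copies of `H` in `F` must have the required size. If it were
smaller, double counting would show that few edges of `F` are saturated. Delete those, and then keep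
deleting the edges through any set `D` of fewer than `k` vertices whose degree has dropped below a
constant times `a * n ^ (k - 1 - #D)`; only a fraction of `F` is lost. In the remaining subgraph a
copy of `H` is built edge by edge so that its edge set stays admissible. Each new edge is prescribed
on at most `ℓ` vertices, and more edges are available than are excluded: few of them meet the
vertices already used, and at most a constant times `a * n ^ (k - ℓ - 1)` of them lie in `Zset`,
that is, would destroy admissibility. The admissible copy obtained can be added to `K`,
contradicting maximality.
-/

section Degree

variable {α : Type} [DecidableEq α] {K F : Finset (Finset α)} {A S D U W : Finset α} {k : ℕ}

lemma uDeg_empty : uDeg K ∅ = #K := by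
  simp [uDeg]

lemma uDeg_pos_of_mem (hA : A ∈ K) (hS : S ⊆ A) : 0 < uDeg K S :=
  card_pos.2 ⟨A, mem_filter.2 ⟨hA, hS⟩⟩

lemma subset_vertexSet_of_uDeg_pos (h : 0 < uDeg K S) : S ⊆ vertexSet K := by
  obtain ⟨A, hA⟩ := card_pos.1 h
  obtain ⟨hAK, hSA⟩ := mem_filter.1 hA
  exact hSA.trans (le_sup (f := id) hAK)

lemma uDeg_insert_le : uDeg (insert A K) S ≤ uDeg K S + 1 := by
  unfold uDeg
  rw [filter_insert]
  split_ifs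
  · exact card_insert_le _ _
  · exact Nat.le_succ _

lemma uDeg_insert_of_not_subset (h : ¬ S ⊆ A) : uDeg (insert A K) S = uDeg K S := by
  rw [uDeg, filter_insert, if_neg h, uDeg]

lemma uDeg_le_pow (hF : F ⊆ U.powersetCard k) : uDeg F S ≤ #U ^ (k - #S) := by
  have hmaps : Set.MapsTo (· \ S) (F.filter (S ⊆ ·) : Set (Finset α))
      (U.powersetCard (k - #S)) := by
    intro E hE
    obtain ⟨hEF, hSE⟩ := mem_filter.1 hE
    obtain ⟨hEU, hEk⟩ := mem_powersetCard.1 (hF hEF)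
    exact mem_powersetCard.2 ⟨sdiff_subset.trans hEU, by rw [card_sdiff_of_subset hSE, hEk]⟩
  have hinj : Set.InjOn (· \ S) (F.filter (S ⊆ ·) : Set (Finset α)) := by
    intro E hE E' hE' h
    rw [← sdiff_union_of_subset (mem_filter.1 hE).2, ← sdiff_union_of_subset (mem_filter.1 hE').2]
    exact congrArg (· ∪ S) h
  calc uDeg F S ≤ #(U.powersetCard (k - #S)) := card_le_card_of_injOn _ hmaps hinj
    _ = (#U).choose (k - #S) := card_powersetCard _ _
    _ ≤ #U ^ (k - #S) := Nat.choose_le_pow _ _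

lemma card_filter_not_disjoint_le (hF : F ⊆ U.powersetCard k) (hWD : Disjoint W D) :
    #{E ∈ F | D ⊆ E ∧ ¬ Disjoint W E} ≤ #W * #U ^ (k - 1 - #D) := by
  have hcover : {E ∈ F | D ⊆ E ∧ ¬ Disjoint W E} ⊆
      W.biUnion fun v => F.filter (insert v D ⊆ ·) := by
    intro E hE
    obtain ⟨hEF, hDE, hWE⟩ := mem_filter.1 hE
    obtain ⟨v, hvW, hvE⟩ := not_disjoint_iff.1 hWE
    exact mem_biUnion.2 ⟨v, hvW, mem_filter.2 ⟨hEF, insert_subset hvE hDE⟩⟩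
  refine (card_le_card hcover).trans (card_biUnion_le_card_mul _ _ _ fun v hv => ?_)
  have hcard : k - #(insert v D) = k - 1 - #D := by
    rw [card_insert_of_notMem (disjoint_left.1 hWD hv)]
    omega
  exact hcard ▸ uDeg_le_pow hF

/- Greedy deletion: a test set violating the bound is removed together with the edges through it,
which costs fewer edges than the weight it frees. -/
lemma exists_subset_forall_le_uDeg {𝒟 : Finset (Finset α)} {wt : Finset α → ℝ}
    (hwt : ∀ D ∈ 𝒟, 0 ≤ wt D) (hsum : ∑ D ∈ 𝒟, wt D < #F) :
    ∃ G ⊆ F, G.Nonempty ∧ ∀ D ∈ 𝒟, ∀ E ∈ G, D ⊆ E → wt D ≤ uDeg G D := by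
  induction 𝒟 using Finset.strongInduction generalizing F with
  | H 𝒟 ih =>
    by_cases hgood : ∀ D ∈ 𝒟, ∀ E ∈ F, D ⊆ E → wt D ≤ uDeg F D
    · have hF : (0 : ℝ) < #F := (sum_nonneg hwt).trans_lt hsum
      exact ⟨F, Subset.rfl, card_pos.1 (mod_cast hF), hgood⟩
    push Not at hgood
    obtain ⟨D, hD, -, -, -, hlt⟩ := hgood
    have hcard : (uDeg F D : ℝ) + #{E ∈ F | ¬ D ⊆ E} = #F :=
      mod_cast card_filter_add_card_filter_not _
    have hrest : ∑ D' ∈ 𝒟.erase D, wt D' < #{E ∈ F | ¬ D ⊆ E} := by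
      have := add_sum_erase 𝒟 wt hD
      linarith
    obtain ⟨G, hGF, hG, hdeg⟩ :=
      ih _ (erase_ssubset hD) (fun D' hD' => hwt D' (mem_of_mem_erase hD')) hrest
    refine ⟨G, hGF.trans (filter_subset _ _), hG, fun D' hD' E hE hDE => ?_⟩
    have hne : D' ≠ D := fun h => (mem_filter.1 (hGF hE)).2 (h ▸ hDE)
    exact hdeg D' (mem_erase.2 ⟨hne, hD'⟩) E hE hDE

lemma sum_powersetCard_mul_pow_le {x : ℝ} (hx : 0 ≤ x) (k : ℕ) (U : Finset α) :
    ∑ D ∈ (range k).biUnion (powersetCard · U), x * (#U : ℝ) ^ (k - 1 - #D) ≤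
      k * x * (#U : ℝ) ^ (k - 1) := by
  rw [sum_biUnion (U.pairwise_disjoint_powersetCard.set_pairwise _)]
  have hlevel : ∀ j ∈ range k,
      ∑ D ∈ U.powersetCard j, x * (#U : ℝ) ^ (k - 1 - #D) ≤ x * (#U : ℝ) ^ (k - 1) := by
    intro j hj
    have hjk : j + (k - 1 - j) = k - 1 := by
      have := mem_range.1 hj
      omega
    have hchoose : ((#U).choose j : ℝ) ≤ (#U : ℝ) ^ j := mod_cast Nat.choose_le_pow _ _
    calc ∑ D ∈ U.powersetCard j, x * (#U : ℝ) ^ (k - 1 - #D)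
        = (#U).choose j * (x * (#U : ℝ) ^ (k - 1 - j)) := by
          rw [sum_powersetCard j U fun i => x * (#U : ℝ) ^ (k - 1 - i), nsmul_eq_mul]
      _ ≤ (#U : ℝ) ^ j * (x * (#U : ℝ) ^ (k - 1 - j)) := by gcongr
      _ = x * (#U : ℝ) ^ (k - 1) := by rw [mul_left_comm, ← pow_add, hjk]
  refine (sum_le_sum hlevel).trans_eq ?_
  rw [sum_const, card_range, nsmul_eq_mul, mul_assoc]

lemma exists_subset_forall_ssubset_le_uDeg (hF : F ⊆ U.powersetCard k) {x : ℝ} (hx : 0 ≤ x)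
    (hcard : k * x * (#U : ℝ) ^ (k - 1) < #F) :
    ∃ G ⊆ F, G.Nonempty ∧ ∀ E ∈ G, ∀ D ⊂ E, x * (#U : ℝ) ^ (k - 1 - #D) ≤ uDeg G D := by
  obtain ⟨G, hGF, hG, hdeg⟩ := exists_subset_forall_le_uDeg
    (fun D _ => by positivity) ((sum_powersetCard_mul_pow_le hx k U).trans_lt hcard)
  refine ⟨G, hGF, hG, fun E hE D hDE => hdeg D ?_ E hE hDE.subset⟩
  obtain ⟨hEU, hEk⟩ := mem_powersetCard.1 (hF (hGF hE))
  exact mem_biUnion.2 ⟨#D, mem_range.2 (hEk ▸ card_lt_card hDE),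
    mem_powersetCard.2 ⟨hDE.subset.trans hEU, rfl⟩⟩

end Degree

section Saturation

variable {α : Type} [DecidableEq α] {K : Finset (Finset α)} {A S T Y : Finset α} {v : α} {t : ℕ}
  {d : ℝ}

lemma Saturated.lt_uDeg_add_one (h : Saturated t d K S) : d ^ (t - #S) < uDeg K S + 1 := by
  rw [h]
  exact Nat.lt_floor_add_one _

lemma Saturated.uDeg_pos (hd : 1 ≤ d) (h : Saturated t d K S) : 0 < uDeg K S := by
  rw [h]
  exact Nat.floor_pos.2 (one_le_pow₀ hd)

lemma Saturated.pow_le_two_mul_uDeg (hd : 1 ≤ d) (h : Saturated t d K S) :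
    d ^ (t - #S) ≤ 2 * uDeg K S := by
  have hpos : (1 : ℝ) ≤ uDeg K S := mod_cast h.uDeg_pos hd
  linarith [h.lt_uDeg_add_one]

lemma graded_empty (hd : 0 ≤ d) : Graded t d (∅ : Finset (Finset α)) := by
  intro S _ _
  simpa [uDeg] using pow_nonneg hd _

lemma Graded.uDeg_add_one_le (hK : Graded t d K) (hd : 0 ≤ d) (hS : 1 ≤ #S) (hSt : #S ≤ t)
    (hsat : ¬ Saturated t d K S) : (uDeg K S : ℝ) + 1 ≤ d ^ (t - #S) := by
  have hle : uDeg K S ≤ ⌊d ^ (t - #S)⌋₊ := Nat.le_floor (hK S hS hSt)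
  have hlt : uDeg K S + 1 ≤ ⌊d ^ (t - #S)⌋₊ := lt_of_le_of_ne hle hsat
  exact_mod_cast (Nat.le_floor_iff (by positivity)).1 hlt

lemma Graded.insert_of_admissible (hK : Graded t d K) (hd : 0 ≤ d) (hA : Admissible t d K A) :
    Graded t d (insert A K) := by
  intro S hS hSt
  by_cases hSA : S ⊆ A
  · have hdeg : (uDeg (insert A K) S : ℝ) ≤ uDeg K S + 1 := mod_cast uDeg_insert_le
    exact hdeg.trans (hK.uDeg_add_one_le hd hS hSt (hA S hSA (card_pos.1 hS)))
  · rw [uDeg_insert_of_not_subset hSA]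
    exact hK S hS hSt

lemma Graded.notMem_of_admissible (hK : Graded t d K) (hd : 0 ≤ d) (hA : Admissible t d K A)
    (hne : A.Nonempty) (hAt : #A = t) : A ∉ K := by
  intro hmem
  have hlt := hK.uDeg_add_one_le hd hne.card_pos hAt.le (hA A Subset.rfl hne)
  rw [hAt, Nat.sub_self, pow_zero] at hlt
  have hpos : (0 : ℝ) < uDeg K A := mod_cast uDeg_pos_of_mem hmem Subset.rfl
  linarith

lemma admissible_singleton (h : ¬ Saturated t d K {v}) : Admissible t d K {v} := by
  intro T hT hne
  rwa [hne.subset_singleton_iff.1 hT]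

lemma Admissible.exists_saturated_insert (hS : Admissible t d K S)
    (h : ¬ Admissible t d K (insert v S)) : ∃ T ⊆ S, v ∉ T ∧ Saturated t d K (insert v T) := by
  unfold Admissible at h
  push Not at h
  obtain ⟨T, hTS, hne, hsat⟩ := h
  have hvT : v ∈ T := by
    by_contra hv
    exact hS T ((subset_insert_iff_of_notMem hv).1 hTS) hne hsat
  exact ⟨T.erase v, subset_insert_iff.1 hTS, notMem_erase v T, by rwa [insert_erase hvT]⟩

lemma Admissible.mem_Zset (hS : Admissible t d K S) (hd : 1 ≤ d)
    (h : ¬ Admissible t d K (insert v S)) (hv : ¬ Saturated t d K {v}) : v ∈ Zset t d K S := by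
  obtain ⟨T, -, -, hsat⟩ := hS.exists_saturated_insert h
  have hvK := subset_vertexSet_of_uDeg_pos (hsat.uDeg_pos hd) (mem_insert_self v T)
  exact mem_filter.2 ⟨hvK, h, hv⟩

/- Double counting of the pairs `(v, A)` with `v ∈ Y`, `A ∈ K` and `insert v T ⊆ A`. -/
lemma card_mul_pow_le_of_saturated_insert (hd : 1 ≤ d) (hK : ∀ A ∈ K, #A ≤ t)
    (hY : ∀ v ∈ Y, v ∉ T ∧ Saturated t d K (insert v T)) :
    #Y * d ^ (t - (#T + 1)) ≤ 2 * t * uDeg K T := by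
  have habove : ∀ v ∈ Y, d ^ (t - (#T + 1)) / 2 ≤
      #((K.filter (T ⊆ ·)).bipartiteAbove (· ∈ ·) v) := by
    intro v hv
    obtain ⟨hvT, hsat⟩ := hY v hv
    have hdeg : #((K.filter (T ⊆ ·)).bipartiteAbove (· ∈ ·) v) = uDeg K (insert v T) := by
      simp only [bipartiteAbove, filter_filter, uDeg, insert_subset_iff, and_comm]
    have hpow := hsat.pow_le_two_mul_uDeg hd
    rw [card_insert_of_notMem hvT] at hpow
    rw [hdeg]
    linarith
  have hbelow : ∀ A ∈ K.filter (T ⊆ ·), (#(Y.bipartiteBelow (· ∈ ·) A) : ℝ) ≤ t := by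
    intro A hA
    have hsub : Y.bipartiteBelow (· ∈ ·) A ⊆ A := fun v hv => (mem_filter.1 hv).2
    exact_mod_cast (card_le_card hsub).trans (hK A (mem_filter.1 hA).1)
  have hcount := card_nsmul_le_card_nsmul (· ∈ ·) habove hbelow
  rw [nsmul_eq_mul, nsmul_eq_mul] at hcount
  unfold uDeg
  linarith

lemma card_mul_pow_le_of_saturated_singleton (hd : 1 ≤ d) (hK : ∀ A ∈ K, #A ≤ t)
    (hY : ∀ v ∈ Y, Saturated t d K {v}) : #Y * d ^ (t - 1) ≤ 2 * t * #K := by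
  have h := card_mul_pow_le_of_saturated_insert (T := ∅) hd hK
    fun v hv => ⟨notMem_empty v, hY v hv⟩
  rwa [uDeg_empty, card_empty, zero_add] at h

lemma Graded.card_le_of_saturated_insert (hgr : Graded t d K) (hd : 1 ≤ d)
    (hK : ∀ A ∈ K, #A ≤ t) (hT : T.Nonempty) (hTt : #T < t)
    (hY : ∀ v ∈ Y, v ∉ T ∧ Saturated t d K (insert v T)) : #Y ≤ 2 * t * d := by
  have hpow : d ^ (t - #T) = d * d ^ (t - (#T + 1)) := by
    rw [← pow_succ']
    congr 1
    omega
  refine le_of_mul_le_mul_right ?_ (by positivity : 0 < d ^ (t - (#T + 1)))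
  calc #Y * d ^ (t - (#T + 1)) ≤ 2 * t * uDeg K T :=
        card_mul_pow_le_of_saturated_insert hd hK hY
    _ ≤ 2 * t * d ^ (t - #T) := by gcongr; exact hgr T hT.card_pos hTt.le
    _ = 2 * t * d * d ^ (t - (#T + 1)) := by rw [hpow, mul_assoc (2 * (t : ℝ))]

lemma Graded.card_Zset_le (hgr : Graded t d K) (hd : 1 ≤ d) (hK : ∀ A ∈ K, #A ≤ t)
    (hS : Admissible t d K S) (hSt : #S < t) : #(Zset t d K S) ≤ 2 ^ #S * (2 * t * d) := by
  let 𝒯 := S.powerset.filter Finset.Nonempty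
  let Y : Finset α → Finset α :=
    fun T => {v ∈ vertexSet K | v ∉ T ∧ Saturated t d K (insert v T)}
  have hcover : Zset t d K S ⊆ 𝒯.biUnion Y := by
    intro v hv
    obtain ⟨hvK, hins, hvsat⟩ := mem_filter.1 hv
    obtain ⟨T, hTS, hvT, hsat⟩ := hS.exists_saturated_insert hins
    have hT : T.Nonempty := by
      rw [nonempty_iff_ne_empty]
      rintro rfl
      exact hvsat hsat
    exact mem_biUnion.2 ⟨T, mem_filter.2 ⟨mem_powerset.2 hTS, hT⟩, mem_filter.2 ⟨hvK, hvT, hsat⟩⟩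
  have hY : ∀ T ∈ 𝒯, (#(Y T) : ℝ) ≤ 2 * t * d := by
    intro T hT
    obtain ⟨hTS, hne⟩ := mem_filter.1 hT
    exact hgr.card_le_of_saturated_insert hd hK hne
      ((card_le_card (mem_powerset.1 hTS)).trans_lt hSt) fun v hv => (mem_filter.1 hv).2
  have h𝒯 : (#𝒯 : ℝ) ≤ 2 ^ #S := by
    exact_mod_cast (card_filter_le _ _).trans_eq (card_powerset S)
  calc (#(Zset t d K S) : ℝ) ≤ ∑ T ∈ 𝒯, (#(Y T) : ℝ) := by
        exact_mod_cast (card_le_card hcover).trans card_biUnion_le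
    _ ≤ #𝒯 * (2 * t * d) := by simpa using sum_le_card_nsmul _ _ _ hY
    _ ≤ 2 ^ #S * (2 * t * d) := by gcongr

end Saturation

section Embedding

variable {α V : Type} [DecidableEq α] [DecidableEq V] {H : Finset (Finset α)}

lemma vertexSet_singleton (E : Finset α) : vertexSet {E} = E :=
  sup_singleton

lemma vertexSet_insert (E : Finset α) : vertexSet (insert E H) = E ∪ vertexSet H :=
  sup_insert

lemma subset_vertexSet {E : Finset α} (hE : E ∈ H) : E ⊆ vertexSet H :=
  le_sup (f := id) hE

lemma card_vertexSet_le {k : ℕ} (h : ∀ E ∈ H, #E = k) : #(vertexSet H) ≤ #H * k := by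
  rw [vertexSet, sup_eq_biUnion]
  exact card_biUnion_le_card_mul _ _ _ fun E hE => (h E hE).le

lemma card_image_image_of_injOn {φ : α → V} (hφ : Set.InjOn φ (vertexSet H)) :
    #(H.image fun E => E.image φ) = #H := by
  rw [vertexSet, sup_eq_biUnion] at hφ
  exact card_image_of_injOn (injOn_image_of_biUnion_injOn hφ)

lemma IsHypertree.nonempty (hH : IsHypertree H) : H.Nonempty := by
  cases hH with
  | single E => exact singleton_nonempty E
  | grow E => exact insert_nonempty E _

lemma exists_eqOn_injOn_union_image_eq {X E : Finset α} {E' : Finset V} {φ : α → V}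
    (hφ : Set.InjOn φ X) (hcard : #E = #E') (hmem : ∀ v ∈ X, φ v ∈ E' ↔ v ∈ E) :
    ∃ ψ : α → V, Set.EqOn ψ φ X ∧ Set.InjOn ψ (E ∪ X : Finset α) ∧ E.image ψ = E' := by
  obtain ⟨g, hg⟩ : ∃ g : E ≃ E', ∀ v ∈ {v : E | (v : α) ∈ X}, (g v : V) = φ v := by
    refine Set.MapsTo.exists_equiv_extend_of_card_eq (by simpa using hcard)
      (fun v hv => (hmem v hv).2 v.2) fun v hv w hw h => Subtype.ext (hφ hv hw h)
  let ψ : α → V := fun v => if hv : v ∈ E then g ⟨v, hv⟩ else φ v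
  have hψE : ∀ v (hv : v ∈ E), ψ v = g ⟨v, hv⟩ := fun v hv => dif_pos hv
  have hψX : Set.EqOn ψ φ X := by
    intro v hv
    by_cases hvE : v ∈ E
    · exact (hψE v hvE).trans (hg ⟨v, hvE⟩ hv)
    · exact dif_neg hvE
  have hinjE : Set.InjOn ψ E := by
    intro v hv w hw h
    rw [hψE v hv, hψE w hw] at h
    exact congrArg Subtype.val (g.injective (Subtype.ext h))
  have himage : E.image ψ = E' := by
    refine eq_of_subset_of_card_le (image_subset_iff.2 fun v hv => ?_) ?_
    · rw [hψE v hv]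
      exact (g ⟨v, hv⟩).2
    · rw [card_image_of_injOn hinjE, hcard]
  refine ⟨ψ, hψX, ?_, himage⟩
  rw [← union_sdiff_self_eq_union, coe_union,
    Set.injOn_union (disjoint_coe.2 disjoint_sdiff)]
  refine ⟨hinjE, ?_, ?_⟩
  · exact (hφ.congr hψX.symm).mono (coe_subset.2 sdiff_subset)
  · intro v hv w hw h
    obtain ⟨hwX, hwE⟩ := mem_sdiff.1 hw
    refine hwE ((hmem w hwX).1 ?_)
    rw [← hψX hwX, ← h, ← himage]
    exact mem_image_of_mem ψ hv

/-- The extension property used to embed hypertrees in `F` edge by edge. Here `T` is the set of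
edges chosen so far, `P` the property of edge sets to be maintained, `D` the prescribed trace of
the next edge on an edge already chosen, and `W` the set of vertices the next edge must avoid. -/
def HasExtensions (F : Finset (Finset V)) (P : Finset (Finset V) → Prop) (ℓ t w : ℕ) : Prop :=
  ∀ T ⊆ F, #T < t → P T → ∀ E ∈ F, ∀ D ⊂ E, #D ≤ ℓ → ∀ W : Finset V, #W ≤ w → Disjoint W D →
    ∃ E' ∈ F, D ⊆ E' ∧ Disjoint W E' ∧ P (insert E' T)

variable {F : Finset (Finset V)} {P : Finset (Finset V) → Prop} {k ℓ t w : ℕ}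

lemma exists_embedding_insert (hF : ∀ E ∈ F, #E = k) (hext : HasExtensions F P ℓ t w)
    (ht : #H < t) (hw : #(vertexSet H) ≤ w) {E Q : Finset α} (hE : #E = k) (hQ : Q ∈ H)
    (hEH : E ∩ vertexSet H = E ∩ Q) (hEQ : E ∩ Q ⊂ Q) (hℓ : #(E ∩ Q) ≤ ℓ) {φ : α → V}
    (hφ : Set.InjOn φ (vertexSet H)) (hφF : H.image (fun A => A.image φ) ⊆ F)
    (hPφ : P (H.image fun A => A.image φ)) :
    ∃ ψ : α → V, Set.InjOn ψ (vertexSet (insert E H)) ∧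
      (insert E H).image (fun A => A.image ψ) ⊆ F ∧ P ((insert E H).image fun A => A.image ψ) := by
  have hQX : Q ⊆ vertexSet H := subset_vertexSet hQ
  have hDQ : (E ∩ Q).image φ ⊂ Q.image φ := by
    rw [← coe_ssubset, coe_image, coe_image, hφ.image_ssubset_image_iff
      (coe_subset.2 (hEQ.subset.trans hQX)) (coe_subset.2 hQX)]
    exact coe_ssubset.2 hEQ
  have hdisj : Disjoint ((vertexSet H \ E).image φ) ((E ∩ Q).image φ) := by
    simp only [disjoint_left, mem_image, Finset.mem_sdiff, mem_inter]
    rintro _ ⟨v, ⟨hvX, hvE⟩, rfl⟩ ⟨u, ⟨huE, huQ⟩, huv⟩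
    exact hvE (hφ (hQX huQ) hvX huv ▸ huE)
  obtain ⟨E', hE', hDE', hWE', hP'⟩ := hext _ hφF (card_image_le.trans_lt ht) hPφ _
    (hφF (mem_image_of_mem _ hQ)) _ hDQ (card_image_le.trans hℓ) _
    (card_image_le.trans ((card_le_card sdiff_subset).trans hw)) hdisj
  have hmem : ∀ v ∈ vertexSet H, φ v ∈ E' ↔ v ∈ E := by
    refine fun v hv => ⟨fun hvE' => ?_, fun hvE => ?_⟩
    · by_contra hvE
      exact disjoint_left.1 hWE' (mem_image_of_mem φ (mem_sdiff.2 ⟨hv, hvE⟩)) hvE'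
    · exact hDE' (mem_image_of_mem φ (hEH ▸ mem_inter.2 ⟨hvE, hv⟩))
  obtain ⟨ψ, hψφ, hψ, himage⟩ :=
    exists_eqOn_injOn_union_image_eq hφ (hE.trans (hF E' hE').symm) hmem
  have hcopy : (insert E H).image (fun A => A.image ψ) =
      insert E' (H.image fun A => A.image φ) := by
    rw [image_insert, himage]
    congr 1
    exact image_congr fun A hA => image_congr fun v hv => hψφ (subset_vertexSet hA hv)
  refine ⟨ψ, ?_, ?_, ?_⟩
  · rwa [vertexSet_insert]
  · rw [hcopy]
    exact insert_subset hE' hφF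
  · rwa [hcopy]

theorem IsHypertree.exists_embedding [Nonempty V] (hH : IsHypertree H) (hHk : ∀ E ∈ H, #E = k)
    (hov : Overlapping ℓ H) (hF : ∀ E ∈ F, #E = k) (hne : F.Nonempty) (hP : ∀ E ∈ F, P {E})
    (hext : HasExtensions F P ℓ t w) (ht : #H ≤ t) (hw : #(vertexSet H) ≤ w) :
    ∃ φ : α → V, Set.InjOn φ (vertexSet H) ∧ H.image (fun E => E.image φ) ⊆ F ∧
      P (H.image fun E => E.image φ) := by
  induction hH with
  | single E =>
    obtain ⟨E', hE'⟩ := hne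
    obtain ⟨φ, -, hφ, himage⟩ := exists_eqOn_injOn_union_image_eq (X := ∅) (E := E)
      (φ := fun _ => Classical.arbitrary V) (by simp)
      ((hHk E (mem_singleton_self E)).trans (hF E' hE').symm) (by simp)
    refine ⟨φ, ?_, ?_, ?_⟩
    · rwa [vertexSet_singleton, ← union_empty E]
    · rwa [image_singleton, himage, singleton_subset_iff]
    · rw [image_singleton, himage]
      exact hP E' hE'
  | @grow H E Q _ hE hQ hEH ih =>
    rw [card_insert_of_notMem hE] at ht
    rw [vertexSet_insert] at hw
    obtain ⟨φ, hφ, hφF, hPφ⟩ := ih (fun A hA => hHk A (mem_insert_of_mem hA))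
      (fun A hA B hB => hov A (mem_insert_of_mem hA) B (mem_insert_of_mem hB)) (by omega)
      ((card_le_card subset_union_right).trans hw)
    have hEk := hHk E (mem_insert_self E H)
    have hQk := hHk Q (mem_insert_of_mem hQ)
    have hne : E ≠ Q := fun h => hE (h ▸ hQ)
    have hEQ : E ∩ Q ⊂ Q := by
      refine inter_subset_right.ssubset_of_ne fun h => hne ?_
      exact (eq_of_subset_of_card_le (inter_eq_right.1 h) (hEk.trans hQk.symm).le).symm
    exact exists_embedding_insert hF hext ht ((card_le_card subset_union_right).trans hw) hEk hQ
      hEH hEQ (hov E (mem_insert_self E H) Q (mem_insert_of_mem hQ) hne) hφ hφF hPφ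

/- Of the edges through `D`, at most `w * #U ^ (k - 1 - #D)` meet `W` and at most
`b * #U ^ (k - ℓ - 1)` destroy `P`. -/
lemma hasExtensions_of_le_uDeg {U : Finset V} (hF : F ⊆ U.powersetCard k) (hU : U.Nonempty)
    {x b : ℝ} (hb : 0 ≤ b) (hx : w + b < x)
    (hdeg : ∀ E ∈ F, ∀ D ⊂ E, x * (#U : ℝ) ^ (k - 1 - #D) ≤ uDeg F D)
    (hP : ∀ T ⊆ F, #T < t → P T →
      #{E ∈ F | ¬ P (insert E T)} ≤ b * (#U : ℝ) ^ (k - ℓ - 1)) :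
    HasExtensions F P ℓ t w := by
  intro T hTF hTt hPT E hE D hDE hDℓ W hW hWD
  by_contra! hno
  have hcover : F.filter (D ⊆ ·) ⊆
      {E ∈ F | D ⊆ E ∧ ¬ Disjoint W E} ∪ {E ∈ F | ¬ P (insert E T)} := by
    intro E' hE'
    obtain ⟨hE'F, hDE'⟩ := mem_filter.1 hE'
    by_cases hWE' : Disjoint W E'
    · exact mem_union_right _ (mem_filter.2 ⟨hE'F, hno E' hE'F hDE' hWE'⟩)
    · exact mem_union_left _ (mem_filter.2 ⟨hE'F, hDE', hWE'⟩)
  have hmeet : (#{E ∈ F | D ⊆ E ∧ ¬ Disjoint W E} : ℝ) ≤ w * (#U : ℝ) ^ (k - 1 - #D) := by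
    exact_mod_cast (card_filter_not_disjoint_le hF hWD).trans (Nat.mul_le_mul_right _ hW)
  have hU1 : (1 : ℝ) ≤ #U := mod_cast hU.card_pos
  have hpow : (#U : ℝ) ^ (k - ℓ - 1) ≤ (#U : ℝ) ^ (k - 1 - #D) :=
    pow_le_pow_right₀ hU1 (by omega)
  have hlt : x * (#U : ℝ) ^ (k - 1 - #D) < x * (#U : ℝ) ^ (k - 1 - #D) :=
    calc x * (#U : ℝ) ^ (k - 1 - #D) ≤ uDeg F D := hdeg E hE D hDE
      _ ≤ #{E ∈ F | D ⊆ E ∧ ¬ Disjoint W E} + #{E ∈ F | ¬ P (insert E T)} := by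
        exact_mod_cast (card_le_card hcover).trans (card_union_le _ _)
      _ ≤ w * (#U : ℝ) ^ (k - 1 - #D) + b * (#U : ℝ) ^ (k - ℓ - 1) :=
        add_le_add hmeet (hP T hTF hTt hPT)
      _ ≤ w * (#U : ℝ) ^ (k - 1 - #D) + b * (#U : ℝ) ^ (k - 1 - #D) := by gcongr
      _ = (w + b) * (#U : ℝ) ^ (k - 1 - #D) := (add_mul _ _ _).symm
      _ < x * (#U : ℝ) ^ (k - 1 - #D) := by gcongr
  exact hlt.false

end Embedding

section Copies

variable {α : Type} [DecidableEq α] {H : Finset (Finset α)} {F : Finset (Finset ℕ)}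
  {K : Finset (Finset (Finset ℕ))} {A : Finset (Finset ℕ)} {k ℓ n t : ℕ} {d μ : ℝ}

lemma isKGraphOn_iff_subset_powersetCard : IsKGraphOn k n F ↔ F ⊆ (vtx n).powersetCard k := by
  simp only [IsKGraphOn, subset_iff, mem_powersetCard]

lemma card_vtx : #(vtx n) = n := by
  simp [vtx]

lemma mem_copies : A ∈ copies H F ↔ A ⊆ F ∧ IsCopyOf H A := by
  rw [copies, mem_filter, mem_powerset]

lemma IsCopyOf.card_eq (hA : IsCopyOf H A) : #A = #H := by
  obtain ⟨φ, hφ, rfl⟩ := hA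
  exact card_image_image_of_injOn hφ

lemma exists_unsaturated_subset (hk : 0 < k) (ht : 0 < t) (hF : F ⊆ (vtx n).powersetCard k)
    (hμ : 0 ≤ μ) (hd : 1 ≤ d) (hK : ∀ A ∈ K, #A ≤ t)
    (hcard : 8 * k * t * 2 ^ t * μ * (n : ℝ) ^ (k - 1) ≤ #F)
    (hsmall : #K < μ * (n : ℝ) ^ (k - 1) * d ^ (t - 1)) :
    ∃ G ⊆ F, G.Nonempty ∧ (∀ E ∈ G, ¬ Saturated t d K {E}) ∧
      ∀ E ∈ G, ∀ D ⊂ E, 4 * t * 2 ^ t * μ * (n : ℝ) ^ (k - 1 - #D) ≤ uDeg G D := by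
  set N : ℝ := (n : ℝ) ^ (k - 1)
  have hdpos : 0 < d ^ (t - 1) := by positivity
  have hμN : 0 < μ * N := pos_of_mul_pos_left ((Nat.cast_nonneg _).trans_lt hsmall) hdpos.le
  have hsat : (#{E ∈ F | Saturated t d K {E}} : ℝ) ≤ 2 * t * (μ * N) := by
    refine le_of_mul_le_mul_right ?_ hdpos
    calc _ ≤ 2 * t * (#K : ℝ) :=
          card_mul_pow_le_of_saturated_singleton hd hK fun E hE => (mem_filter.1 hE).2
      _ ≤ 2 * t * (μ * N * d ^ (t - 1)) := by gcongr
      _ = 2 * t * (μ * N) * d ^ (t - 1) := (mul_assoc _ _ _).symm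
  have hsplit : (#{E ∈ F | Saturated t d K {E}} : ℝ) + #{E ∈ F | ¬ Saturated t d K {E}} = #F :=
    mod_cast card_filter_add_card_filter_not _
  have hunsat : k * (4 * t * 2 ^ t * μ) * N < #{E ∈ F | ¬ Saturated t d K {E}} := by
    have hk1 : (1 : ℝ) ≤ k := mod_cast hk
    have hpow : (1 : ℝ) ≤ 2 ^ t := one_le_pow₀ one_le_two
    have : (0 : ℝ) < t := mod_cast ht
    have hgap : 2 * (t * (μ * N)) < 4 * (k * 2 ^ t) * (t * (μ * N)) := by
      gcongr
      nlinarith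
    linarith
  obtain ⟨G, hGF, hG, hdeg⟩ := exists_subset_forall_ssubset_le_uDeg
    ((filter_subset _ _).trans hF) (by positivity : 0 ≤ 4 * t * 2 ^ t * μ)
    (by rwa [card_vtx])
  rw [card_vtx] at hdeg
  exact ⟨G, hGF.trans (filter_subset _ _), hG, fun E hE => (mem_filter.1 (hGF hE)).2, hdeg⟩

lemma hasExtensions_admissible (ht : 0 < t) (hn : 0 < n) (hF : F ⊆ (vtx n).powersetCard k)
    (hμ : 0 < μ) (hkμ : k ≤ μ) (hd : 1 ≤ d) (hdμ : d = μ * (n : ℝ) ^ (k - ℓ - 1))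
    (hK : ∀ A ∈ K, #A ≤ t) (hgr : Graded t d K) (hsat : ∀ E ∈ F, ¬ Saturated t d K {E})
    (hdeg : ∀ E ∈ F, ∀ D ⊂ E, 4 * t * 2 ^ t * μ * (n : ℝ) ^ (k - 1 - #D) ≤ uDeg F D) :
    HasExtensions F (Admissible t d K) ℓ t (t * k) := by
  have : (0 : ℝ) < t := mod_cast ht
  refine hasExtensions_of_le_uDeg (b := 2 * t * 2 ^ t * μ) (x := 4 * t * 2 ^ t * μ) hF
    (card_pos.1 (by rwa [card_vtx])) (by positivity) ?_ (by rwa [card_vtx]) ?_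
  · have hpow : (1 : ℝ) ≤ 2 ^ t := one_le_pow₀ one_le_two
    have hlt : (t : ℝ) * k < t * (2 * 2 ^ t * μ) := by
      gcongr
      nlinarith
    push_cast
    linarith
  · intro T _ hTt hT
    have hZ : {E ∈ F | ¬ Admissible t d K (insert E T)} ⊆ Zset t d K T := fun E hE =>
      hT.mem_Zset hd (mem_filter.1 hE).2 (hsat E (mem_filter.1 hE).1)
    calc (#{E ∈ F | ¬ Admissible t d K (insert E T)} : ℝ) ≤ #(Zset t d K T) :=
          mod_cast card_le_card hZ
      _ ≤ 2 ^ #T * (2 * t * d) := hgr.card_Zset_le hd hK hT hTt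
      _ ≤ 2 ^ t * (2 * t * d) := by gcongr; exact one_le_two
      _ = 2 * t * 2 ^ t * μ * (#(vtx n) : ℝ) ^ (k - ℓ - 1) := by rw [hdμ, card_vtx]; ring

lemma exists_admissible_copy (hk : 0 < k) (hn : 0 < n) (hH : IsKTree k H) (hov : Overlapping ℓ H)
    (hF : F ⊆ (vtx n).powersetCard k) (hkμ : k ≤ μ) (hd : d = μ * (n : ℝ) ^ (k - ℓ - 1))
    (hcard : 8 * k * #H * 2 ^ #H * μ * (n : ℝ) ^ (k - 1) ≤ #F) (hK : ∀ A ∈ K, #A ≤ #H)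
    (hgr : Graded #H d K) (hsmall : #K < μ * (n : ℝ) ^ (k - 1) * d ^ (#H - 1)) :
    ∃ A ∈ copies H F, Admissible #H d K A := by
  have hkR : (1 : ℝ) ≤ k := mod_cast hk
  have hμ : 0 < μ := by linarith
  have hd1 : 1 ≤ d := by
    rw [hd]
    exact one_le_mul_of_one_le_of_one_le (hkR.trans hkμ) (one_le_pow₀ (mod_cast hn))
  have ht : 0 < #H := hH.1.nonempty.card_pos
  obtain ⟨G, hGF, hG, hsat, hdeg⟩ :=
    exists_unsaturated_subset hk ht hF hμ.le hd1 hK hcard hsmall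
  obtain ⟨φ, hφ, hφG, hadm⟩ := hH.1.exists_embedding hH.2 hov
    (fun E hE => (mem_powersetCard.1 (hF (hGF hE))).2) hG
    (fun E hE => admissible_singleton (hsat E hE))
    (hasExtensions_admissible ht hn (hGF.trans hF) hμ hkμ hd1 hd hK hgr hsat hdeg)
    le_rfl (card_vertexSet_le hH.2)
  exact ⟨_, mem_copies.2 ⟨hφG.trans hGF, φ, hφ, rfl⟩, hadm⟩

lemma exists_graded_copies (hk : 0 < k) (hn : 0 < n) (hH : IsKTree k H) (hov : Overlapping ℓ H)
    (hF : F ⊆ (vtx n).powersetCard k) (hkμ : k ≤ μ) (hd : d = μ * (n : ℝ) ^ (k - ℓ - 1))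
    (hcard : 8 * k * #H * 2 ^ #H * μ * (n : ℝ) ^ (k - 1) ≤ #F) :
    ∃ K ⊆ copies H F, Graded #H d K ∧ μ * (n : ℝ) ^ (k - 1) * d ^ (#H - 1) ≤ #K := by
  have hμ : 0 ≤ μ := (Nat.cast_nonneg k).trans hkμ
  have hd0 : 0 ≤ d := hd ▸ by positivity
  obtain ⟨K, hK, hmax⟩ := exists_max_image ((copies H F).powerset.filter (Graded #H d)) card
    ⟨∅, mem_filter.2 ⟨empty_mem_powerset _, graded_empty hd0⟩⟩
  obtain ⟨hKF, hgr⟩ := mem_filter.1 hK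
  rw [mem_powerset] at hKF
  refine ⟨K, hKF, hgr, le_of_not_gt fun hsmall => ?_⟩
  obtain ⟨A, hA, hadm⟩ := exists_admissible_copy hk hn hH hov hF hkμ hd hcard
    (fun A hA => (mem_copies.1 (hKF hA)).2.card_eq.le) hgr hsmall
  have hAH := (mem_copies.1 hA).2.card_eq
  have hAK : A ∉ K := hgr.notMem_of_admissible hd0 hadm
    (card_pos.1 (hAH ▸ hH.1.nonempty.card_pos)) hAH
  have hle := hmax (insert A K) (mem_filter.2
    ⟨mem_powerset.2 (insert_subset hA hKF), hgr.insert_of_admissible hd0 hadm⟩)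
  rw [card_insert_of_notMem hAK] at hle
  omega

end Copies

lemma half_pow_div_factorial_le_choose {n r : ℕ} (h : 2 * r ≤ n) :
    ((n : ℝ) / 2) ^ r / r.factorial ≤ n.choose r := by
  have hhalf : (n : ℝ) / 2 ≤ (n + 1 - r : ℕ) := by
    rw [div_le_iff₀ two_pos]
    norm_cast
    omega
  calc ((n : ℝ) / 2) ^ r / r.factorial ≤ ((n + 1 - r : ℕ) : ℝ) ^ r / r.factorial := by gcongr
    _ ≤ n.choose r := Nat.pow_le_choose r n

theorem stmt_14_general {α : Type} [DecidableEq α] (k ℓ t : ℕ) (hk : 0 < k)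
    (H : Finset (Finset α)) (hH : IsKTree k H) (hov : Overlapping ℓ H) (hte : #H = t) :
    ∃ a₀ β : ℝ, 0 < a₀ ∧ 0 < β ∧ ∃ n₀ : ℕ, ∀ n ≥ n₀,
      ∀ F : Finset (Finset ℕ), ∀ a : ℝ, IsKGraphOn k n F →
      (#F : ℝ) = a * (n.choose (k - 1) : ℝ) → a₀ ≤ a →
      ∃ K : Finset (Finset (Finset ℕ)),
        (∀ A ∈ K, A ⊆ F ∧ IsCopyOf H A) ∧
        β * a * (n : ℝ) ^ (k - 1) * (β * a * (n : ℝ) ^ (k - ℓ - 1)) ^ (t - 1) ≤ (#K : ℝ) ∧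
        ∀ S : Finset (Finset ℕ), S ⊆ F → 1 ≤ #S → #S ≤ t →
          (uDeg K S : ℝ) ≤ (β * a * (n : ℝ) ^ (k - ℓ - 1)) ^ (t - #S) := by
  subst hte
  have ht : 0 < #H := hH.1.nonempty.card_pos
  let β : ℝ := 1 / (8 * k * #H * 2 ^ #H * (2 ^ (k - 1) * (k - 1).factorial))
  have hβ : 0 < β := by positivity
  refine ⟨k / β, β, by positivity, hβ, 2 * k, fun n hn F a hF hFa ha => ?_⟩
  have ha0 : 0 ≤ a := le_trans (by positivity) ha
  have hkμ : k ≤ β * a := (div_le_iff₀' hβ).1 ha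
  have hcard : 8 * k * #H * 2 ^ #H * (β * a) * (n : ℝ) ^ (k - 1) ≤ #F :=
    calc 8 * k * #H * 2 ^ #H * (β * a) * (n : ℝ) ^ (k - 1)
        = a * (((n : ℝ) / 2) ^ (k - 1) / (k - 1).factorial) := by
          simp only [β, div_pow]
          field_simp
      _ ≤ a * n.choose (k - 1) := by
          gcongr
          exact half_pow_div_factorial_le_choose (by omega)
      _ = #F := hFa.symm
  obtain ⟨K, hKF, hgr, hlarge⟩ := exists_graded_copies hk (by omega) hH hov
    (isKGraphOn_iff_subset_powersetCard.1 hF) hkμ rfl hcard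
  exact ⟨K, fun A hA => mem_copies.1 (hKF hA), hlarge, fun S _ => hgr S⟩

/-- balanced supersaturation, dense case: for a 2-contractible
`ℓ`-overlapping `k`-tree `H` with `t` edges there exist `a₀, β` such that any `k`-graph
with `a·C(n,k−1)` edges, `a ≥ a₀`, contains a collection `K` of copies of `H` with
`|K| ≥ β·a·n^{k−1}·(β·a·n^{k−ℓ−1})^{t−1}` and `d_K(S) ≤ (β·a·n^{k−ℓ−1})^{t−|S|}`. -/
theorem stmt_14 {α : Type} [DecidableEq α] (k ℓ t : ℕ) (hk : 4 ≤ k)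
    (H : Finset (Finset α)) (hH : IsKTree k H) (h2 : TwoContractible H)
    (hov : Overlapping ℓ H) (hte : H.card = t) :
    ∃ a₀ β : ℝ, 0 < a₀ ∧ 0 < β ∧ ∃ n₀ : ℕ, ∀ n ≥ n₀,
      ∀ F : Finset (Finset ℕ), ∀ a : ℝ, IsKGraphOn k n F →
      (F.card : ℝ) = a * (n.choose (k - 1) : ℝ) → a₀ ≤ a →
      ∃ K : Finset (Finset (Finset ℕ)),
        (∀ A ∈ K, A ⊆ F ∧ IsCopyOf H A) ∧
        β * a * (n : ℝ) ^ (k - 1) * (β * a * (n : ℝ) ^ (k - ℓ - 1)) ^ (t - 1)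
          ≤ (K.card : ℝ) ∧
        ∀ S : Finset (Finset ℕ), S ⊆ F → 1 ≤ S.card → S.card ≤ t →
          (uDeg K S : ℝ) ≤ (β * a * (n : ℝ) ^ (k - ℓ - 1)) ^ (t - S.card) := by
  exact stmt_14_general k ℓ t (by omega) H hH hov hte
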